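/- Let q ≥ 2 and let 𝒯: V_d → V_d be the linear map determined by 𝒯(τ⊗τ) = Σ_{σ∈N_τ} σ⊗σ for τ ∈ σ_q. Then: (i) 𝒯 commutes with φ⊗²(U) restricted to V_d for every U ∈ 𝒩_q; (ii) 𝒯(Σ_{σ∈σ_q} σ⊗σ) = (d²/2) Σ_{σ∈σ_q} σ⊗σ; (iii) 𝒯²(v) = (d²/4) v for every v = Σ_{σ∈σ_q} λ_σ σ⊗σ with Σ_{σ∈σ_q} λ_σ = 0; (iv) 𝒯 is diagonalizable with eigenvalues d²/2, −d/2 and d/2, of multiplicities 1, d(d+1)/2 − 1 and d(d−1)/2 − 1 respectively. -/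

import Mathlib

open Matrix MeasureTheory
open scoped Kronecker

noncomputable section

namespace CliffordPaper

/-- The single-qubit Pauli matrices `1, X, Y, Z`. -/
def pauli1 : Fin 4 → Matrix (Fin 2) (Fin 2) ℂ :=
  ![1, !![0, 1; 1, 0], !![0, -Complex.I; Complex.I, 0], !![1, 0; 0, -1]]

/-- Index type for the computational basis of `q` qubits. -/
abbrev Idx (q : ℕ) := Fin q → Fin 2

/-- The space `M_d` of `d × d` complex matrices, `d = 2^q`. -/
abbrev Mat (q : ℕ) := Matrix (Idx q) (Idx q) ℂ

/-- The space `M_d ⊗ M_d`, realized as matrices indexed by the product index set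
(the tensor factors combine via the Kronecker product `⊗ₖ`). -/
abbrev BMat (q : ℕ) := Matrix (Idx q × Idx q) (Idx q × Idx q) ℂ

/-- The `q`-fold Kronecker product of single-qubit Paulis with labels `a`. -/
def PauliOp {q : ℕ} (a : Fin q → Fin 4) : Mat q :=
  Matrix.of fun x y => ∏ i, pauli1 (a i) (x i) (y i)

/-- `√d` as a complex number, where `d = 2^q`. -/
def sqrtd (q : ℕ) : ℂ := (Real.sqrt (2 ^ q) : ℝ)

/-- The set `σ̂_q` of normalized Pauli operators. -/
def sigmaHat (q : ℕ) : Set (Mat q) :=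
  {M | ∃ a : Fin q → Fin 4, M = (sqrtd q)⁻¹ • PauliOp a}

/-- The normalized identity `σ₀ = 1/√d`. -/
def sigma0 (q : ℕ) : Mat q := (sqrtd q)⁻¹ • (1 : Mat q)

/-- `σ_q = σ̂_q \ {σ₀}`. -/
def sigmaSet (q : ℕ) : Set (Mat q) := sigmaHat q \ {sigma0 q}

/-- `N_τ`: the normalized nonidentity Paulis anticommuting with `τ`. -/
def NSet {q : ℕ} (τ : Mat q) : Set (Mat q) :=
  {σ | σ ∈ sigmaSet q ∧ σ * τ + τ * σ = 0}

/-- `C_τ`: the normalized nonidentity Paulis distinct from `τ` commuting with `τ`. -/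
def CSet {q : ℕ} (τ : Mat q) : Set (Mat q) :=
  {σ | σ ∈ sigmaSet q ∧ σ ≠ τ ∧ σ * τ = τ * σ}

/-- `Ĉ_τ`: the normalized Paulis commuting with `τ`. -/
def CHatSet {q : ℕ} (τ : Mat q) : Set (Mat q) :=
  {σ | σ ∈ sigmaHat q ∧ σ * τ = τ * σ}

/-- The normalized product `σ·τ = √d στ`. -/
def nprod {q : ℕ} (σ τ : Mat q) : Mat q := sqrtd q • (σ * τ)

/-- The Clifford normalizer `𝒩_q`: unitaries mapping normalized Paulis to
signed normalized Paulis under conjugation. -/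
def Cliff (q : ℕ) : Set (Mat q) :=
  {U | U ∈ Matrix.unitaryGroup (Idx q) ℂ ∧
    ∀ σ ∈ sigmaHat q, ∃ τ ∈ sigmaHat q, U * σ * Uᴴ = τ ∨ U * σ * Uᴴ = -τ}

/-- The two-copy representation `φ⊗²(U) : A ⊗ B ↦ (UAU†) ⊗ (UBU†)`, extended linearly. -/
def twoCopy {q : ℕ} (U : Mat q) : BMat q →ₗ[ℂ] BMat q where
  toFun M := (U ⊗ₖ U) * M * (U ⊗ₖ U)ᴴ
  map_add' M N := by
    show (U ⊗ₖ U) * (M + N) * (U ⊗ₖ U)ᴴ = (U ⊗ₖ U) * M * (U ⊗ₖ U)ᴴ + (U ⊗ₖ U) * N * (U ⊗ₖ U)ᴴ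
    rw [Matrix.mul_add, Matrix.add_mul]
  map_smul' c M := by
    show (U ⊗ₖ U) * (c • M) * (U ⊗ₖ U)ᴴ = c • ((U ⊗ₖ U) * M * (U ⊗ₖ U)ᴴ)
    rw [Matrix.mul_smul, Matrix.smul_mul]

/-- The Hilbert–Schmidt inner product `⟨A, B⟩ = tr(A† B)`. -/
def hs {q : ℕ} (A B : BMat q) : ℂ := (Aᴴ * B).trace

/-- A subspace is invariant under the two-copy representation of `𝒩_q`. -/
def IsInvariant (q : ℕ) (W : Submodule ℂ (BMat q)) : Prop :=
  ∀ U ∈ Cliff q, ∀ v ∈ W, twoCopy U v ∈ W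

/-- A nonzero invariant subspace carries an irreducible subrepresentation. -/
def CarriesIrred (q : ℕ) (W : Submodule ℂ (BMat q)) : Prop :=
  W ≠ ⊥ ∧ IsInvariant q W ∧ ∀ W' ≤ W, IsInvariant q W' → W' = ⊥ ∨ W' = W

/-- Two invariant subspaces carry equivalent subrepresentations: there is a linear
isomorphism between them intertwining the two-copy representation. -/
def EquivRep (q : ℕ) (W W' : Submodule ℂ (BMat q)) : Prop :=
  ∃ T : BMat q →ₗ[ℂ] BMat q, Submodule.map T W = W' ∧
    (∀ x ∈ W, T x = 0 → x = 0) ∧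
    ∀ U ∈ Cliff q, ∀ x ∈ W, T (twoCopy U x) = twoCopy U (T x)

/-- `S_{σ,τ} = (σ⊗τ + τ⊗σ)/√2`. -/
def SVec {q : ℕ} (σ τ : Mat q) : BMat q :=
  ((Real.sqrt 2 : ℂ))⁻¹ • (σ ⊗ₖ τ + τ ⊗ₖ σ)

/-- `A_{σ,τ} = (σ⊗τ − τ⊗σ)/√2`. -/
def AVec {q : ℕ} (σ τ : Mat q) : BMat q :=
  ((Real.sqrt 2 : ℂ))⁻¹ • (σ ⊗ₖ τ - τ ⊗ₖ σ)

/-- The trivial sector `V_id`. -/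
def Vid (q : ℕ) : Submodule ℂ (BMat q) :=
  Submodule.span ℂ {sigma0 q ⊗ₖ sigma0 q}

/-- The right adjoint sector `V_r`. -/
def Vr (q : ℕ) : Submodule ℂ (BMat q) :=
  Submodule.span ℂ {M | ∃ τ ∈ sigmaSet q, M = sigma0 q ⊗ₖ τ}

/-- The left adjoint sector `V_l`. -/
def Vl (q : ℕ) : Submodule ℂ (BMat q) :=
  Submodule.span ℂ {M | ∃ τ ∈ sigmaSet q, M = τ ⊗ₖ sigma0 q}

/-- The diagonal sector `V_d`. -/
def Vdiag (q : ℕ) : Submodule ℂ (BMat q) :=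
  Submodule.span ℂ {M | ∃ τ ∈ sigmaSet q, M = τ ⊗ₖ τ}

/-- The symmetric commuting sector `V_[S]`. -/
def VScom (q : ℕ) : Submodule ℂ (BMat q) :=
  Submodule.span ℂ {M | ∃ τ ∈ sigmaSet q, ∃ σ ∈ CSet τ, M = SVec σ τ}

/-- The symmetric anti-commuting sector `V_{S}`. -/
def VSanti (q : ℕ) : Submodule ℂ (BMat q) :=
  Submodule.span ℂ {M | ∃ τ ∈ sigmaSet q, ∃ σ ∈ NSet τ, M = SVec σ τ}

/-- The antisymmetric commuting sector `V_[A]`. -/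
def VAcom (q : ℕ) : Submodule ℂ (BMat q) :=
  Submodule.span ℂ {M | ∃ τ ∈ sigmaSet q, ∃ σ ∈ CSet τ, M = AVec σ τ}

/-- The antisymmetric anti-commuting sector `V_{A}`. -/
def VAanti (q : ℕ) : Submodule ℂ (BMat q) :=
  Submodule.span ℂ {M | ∃ τ ∈ sigmaSet q, ∃ σ ∈ NSet τ, M = AVec σ τ}

/-- `V_[A]` presented with the spanning vectors `A_{σ,σ·τ}`, `σ ∈ C_τ`. -/
def VAcom' (q : ℕ) : Submodule ℂ (BMat q) :=
  Submodule.span ℂ {M | ∃ τ ∈ sigmaSet q, ∃ σ ∈ CSet τ, M = AVec σ (nprod σ τ)}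

/-- `V_0 = span{Σ_{σ∈σ_q} σ⊗σ}`. -/
def V0diag (q : ℕ) : Submodule ℂ (BMat q) :=
  Submodule.span ℂ {∑ᶠ σ ∈ sigmaSet q, σ ⊗ₖ σ}

/-- `V_1`, the "positive" part of the diagonal sector. -/
def V1diag (q : ℕ) : Submodule ℂ (BMat q) :=
  Submodule.span ℂ {v | ∃ lam : Mat q → ℂ,
    v = ∑ᶠ σ ∈ sigmaSet q, lam σ • (σ ⊗ₖ σ) ∧
    (∑ᶠ σ ∈ sigmaSet q, lam σ) = 0 ∧
    ∀ τ ∈ sigmaSet q, (∑ᶠ σ ∈ NSet τ, lam σ) = -((2 ^ q : ℂ) / 2) * lam τ}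

/-- `V_2`, the "negative" part of the diagonal sector. -/
def V2diag (q : ℕ) : Submodule ℂ (BMat q) :=
  Submodule.span ℂ {v | ∃ lam : Mat q → ℂ,
    v = ∑ᶠ σ ∈ sigmaSet q, lam σ • (σ ⊗ₖ σ) ∧
    (∑ᶠ σ ∈ sigmaSet q, lam σ) = 0 ∧
    ∀ τ ∈ sigmaSet q, (∑ᶠ σ ∈ NSet τ, lam σ) = ((2 ^ q : ℂ) / 2) * lam τ}

/-- `v^[adj]_τ = (2|C_τ|)^{-1/2} Σ_{σ∈C_τ} S_{σ,σ·τ}`. -/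
def vadjS {q : ℕ} (τ : Mat q) : BMat q :=
  ((Real.sqrt (2 * ((CSet τ).ncard : ℝ)) : ℂ))⁻¹ • ∑ᶠ σ ∈ CSet τ, SVec σ (nprod σ τ)

/-- `v^{adj}_τ = (2|N_τ|)^{-1/2} Σ_{σ∈N_τ} A_{σ,iσ·τ}`. -/
def vadjA {q : ℕ} (τ : Mat q) : BMat q :=
  ((Real.sqrt (2 * ((NSet τ).ncard : ℝ)) : ℂ))⁻¹ •
    ∑ᶠ σ ∈ NSet τ, AVec σ (Complex.I • nprod σ τ)

/-- The symmetric adjoint sector `V_[adj]`. -/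
def VadjS (q : ℕ) : Submodule ℂ (BMat q) :=
  Submodule.span ℂ {M | ∃ τ ∈ sigmaSet q, M = vadjS τ}

/-- The antisymmetric adjoint sector `V_{adj}`. -/
def VadjA (q : ℕ) : Submodule ℂ (BMat q) :=
  Submodule.span ℂ {M | ∃ τ ∈ sigmaSet q, M = vadjA τ}

/-- The orthogonal complement `V^⊥_{adj}` of `V_{adj}` inside `V_{A}`. -/
def VadjAperp (q : ℕ) : Submodule ℂ (BMat q) :=
  Submodule.span ℂ {v | v ∈ VAanti q ∧ ∀ w ∈ VadjA q, hs w v = 0}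

/-- `V_{1}^τ`. -/
def V1symτ (q : ℕ) (τ : Mat q) : Submodule ℂ (BMat q) :=
  Submodule.span ℂ {v | ∃ lam : Mat q → ℂ,
    v = ∑ᶠ σ ∈ NSet τ, lam σ • SVec σ (Complex.I • nprod σ τ) ∧
    ∀ ν ∈ NSet τ, (∑ᶠ σ ∈ NSet τ ∩ CSet ν, lam σ) - (∑ᶠ σ ∈ NSet τ ∩ NSet ν, lam σ)
      = ((2 ^ q : ℂ) / 2) * lam ν}

/-- `V_{2}^τ`. -/
def V2symτ (q : ℕ) (τ : Mat q) : Submodule ℂ (BMat q) :=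
  Submodule.span ℂ {v | ∃ lam : Mat q → ℂ,
    v = ∑ᶠ σ ∈ NSet τ, lam σ • SVec σ (Complex.I • nprod σ τ) ∧
    ∀ ν ∈ NSet τ, (∑ᶠ σ ∈ NSet τ ∩ CSet ν, lam σ) - (∑ᶠ σ ∈ NSet τ ∩ NSet ν, lam σ)
      = -((2 ^ q : ℂ) / 2) * lam ν}

/-- `V_{1} = ⊕_τ V_{1}^τ`. -/
def V1sym (q : ℕ) : Submodule ℂ (BMat q) := ⨆ τ ∈ sigmaSet q, V1symτ q τ

/-- `V_{2} = ⊕_τ V_{2}^τ`. -/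
def V2sym (q : ℕ) : Submodule ℂ (BMat q) := ⨆ τ ∈ sigmaSet q, V2symτ q τ

/-- The defining property of the map `Θ` on `V_[A]`. -/
def ThetaProp (q : ℕ) (Θ : BMat q →ₗ[ℂ] BMat q) : Prop :=
  ∀ τ ∈ sigmaSet q, ∀ σ ∈ CSet τ,
    Θ (AVec σ (nprod σ τ)) =
      (∑ᶠ σ' ∈ NSet τ ∩ CSet σ, AVec σ' (Complex.I • nprod σ' τ)) -
      ∑ᶠ σ' ∈ NSet τ ∩ NSet σ, AVec σ' (Complex.I • nprod σ' τ)

/-- `V` = span of off-diagonal products `σ⊗σ̂`, `σ ≠ σ̂`. -/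
def Voff (q : ℕ) : Submodule ℂ (BMat q) :=
  Submodule.span ℂ {M | ∃ σ ∈ sigmaSet q, ∃ σ' ∈ sigmaSet q, σ ≠ σ' ∧ M = σ ⊗ₖ σ'}

/-- `V^τ` = span of the `σ⊗σ̂` with `σ·σ̂ ∈ {τ, −τ, iτ, −iτ}`. -/
def Vtau (q : ℕ) (τ : Mat q) : Submodule ℂ (BMat q) :=
  Submodule.span ℂ {M | ∃ σ ∈ sigmaSet q, ∃ σ' ∈ sigmaSet q,
    (nprod σ σ' = τ ∨ nprod σ σ' = -τ ∨ nprod σ σ' = Complex.I • τ ∨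
      nprod σ σ' = -(Complex.I • τ)) ∧ M = σ ⊗ₖ σ'}


lemma matrix_spec {I : Type*} [Fintype I] [DecidableEq I] (A : Matrix I I ℂ) (d : ℕ) (D : ℂ) (hDd : D = (d : ℂ)) (hd : 2 ≤ d)
    (hcard : Fintype.card I + 1 = d ^ 2)
    (hA1 : A *ᵥ 1 = (D ^ 2 / 2) • (1 : I → ℂ))
    (hA2 : ∀ v : I → ℂ, A *ᵥ (A *ᵥ v) = (D ^ 2 / 4) • (v + (∑ i, v i) • (1 : I → ℂ)))
    (htr : A.trace = 0) :
    (⊤ : Submodule ℂ (I → ℂ)) =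
      (Module.End.eigenspace (Matrix.toLin' A) (D ^ 2 / 2)) ⊔
      (Module.End.eigenspace (Matrix.toLin' A) (-(D / 2))) ⊔
      (Module.End.eigenspace (Matrix.toLin' A) (D / 2)) ∧
    Module.finrank ℂ (Module.End.eigenspace (Matrix.toLin' A) (D ^ 2 / 2)) = 1 ∧
    Module.finrank ℂ (Module.End.eigenspace (Matrix.toLin' A) (-(D / 2))) =
      d * (d + 1) / 2 - 1 ∧
    Module.finrank ℂ (Module.End.eigenspace (Matrix.toLin' A) (D / 2)) =
      d * (d - 1) / 2 - 1 := by
  subst hDd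
  have hd0 : (d : ℂ) ≠ 0 := by
    have : d ≠ 0 := by omega
    exact_mod_cast this
  have hd1 : (d : ℂ) ≠ 1 := by
    have : d ≠ 1 := by omega
    exact_mod_cast this
  have hdm1 : (d : ℂ) ≠ -1 := by
    intro h
    have h2 : ((d + 1 : ℕ) : ℂ) = 0 := by push_cast; rw [h]; ring
    exact absurd (by exact_mod_cast h2) (Nat.succ_ne_zero d)
  have hD1 : (d : ℂ) ^ 2 - 1 ≠ 0 := by
    intro h
    have h2 : ((d : ℂ) - 1) * (d + 1) = 0 := by linear_combination h
    rcases mul_eq_zero.1 h2 with h3 | h3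
    · exact hd1 (by linear_combination h3)
    · exact hdm1 (by linear_combination h3)
  have hcardC : (Fintype.card I : ℂ) = (d : ℂ) ^ 2 - 1 := by
    have : ((Fintype.card I + 1 : ℕ) : ℂ) = ((d ^ 2 : ℕ) : ℂ) := by rw [hcard]
    push_cast at this
    linear_combination this
  have htop : (⊤ : Submodule ℂ (I → ℂ)) =
      (Module.End.eigenspace (Matrix.toLin' A) ((d : ℂ) ^ 2 / 2)) ⊔
      (Module.End.eigenspace (Matrix.toLin' A) (-((d : ℂ) / 2))) ⊔
      (Module.End.eigenspace (Matrix.toLin' A) ((d : ℂ) / 2)) := by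
    symm
    rw [eq_top_iff]
    rintro v -
    set c : ℂ := (∑ i, v i) / (d ^ 2 - 1) with hc
    set u : I → ℂ := v - c • 1 with hu
    have husum : ∑ i, u i = 0 := by
      simp only [hu, Pi.sub_apply, Pi.smul_apply, Pi.one_apply, smul_eq_mul, mul_one,
        Finset.sum_sub_distrib, Finset.sum_const, Finset.card_univ, nsmul_eq_mul, hcardC, hc]
      field_simp
      ring
    have hAu : A *ᵥ (A *ᵥ u) = ((d : ℂ) ^ 2 / 4) • u := by
      rw [hA2, husum]; simp
    have hv : v = c • (1 : I → ℂ) + (2⁻¹ : ℂ) • (u - (2 / (d : ℂ)) • (A *ᵥ u)) +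
        (2⁻¹ : ℂ) • (u + (2 / (d : ℂ)) • (A *ᵥ u)) := by
      ext i
      simp [hu]
      ring
    rw [hv]
    refine Submodule.add_mem_sup (Submodule.add_mem_sup ?_ ?_) ?_
    · rw [Module.End.mem_eigenspace_iff, Matrix.toLin'_apply, Matrix.mulVec_smul, hA1, smul_comm]
    · rw [Module.End.mem_eigenspace_iff, Matrix.toLin'_apply, Matrix.mulVec_smul, Matrix.mulVec_sub,
        Matrix.mulVec_smul, hAu]
      ext i
      simp
      field_simp
      ring
    · rw [Module.End.mem_eigenspace_iff, Matrix.toLin'_apply, Matrix.mulVec_smul, Matrix.mulVec_add,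
        Matrix.mulVec_smul, hAu]
      ext i
      simp
      field_simp
      ring
  have hI : Nonempty I := by
    rw [← Fintype.card_pos_iff]
    nlinarith
  have h0 : Module.finrank ℂ (Module.End.eigenspace (Matrix.toLin' A) ((d : ℂ) ^ 2 / 2)) = 1 := by
    have : Module.End.eigenspace (Matrix.toLin' A) ((d : ℂ) ^ 2 / 2) =
        Submodule.span ℂ {(1 : I → ℂ)} := by
      ext v
      rw [Submodule.mem_span_singleton, Module.End.mem_eigenspace_iff, Matrix.toLin'_apply]
      constructor
      · intro h
        have h2 := hA2 v
        rw [h, Matrix.mulVec_smul, h] at h2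
        refine ⟨(∑ i, v i) / (d ^ 2 - 1), ?_⟩
        ext i
        have h3 := congrFun h2 i
        simp only [Pi.smul_apply, Pi.add_apply, Pi.one_apply, smul_eq_mul, mul_one] at h3 ⊢
        rw [div_eq_iff hD1]
        have h4 : (d : ℂ) ^ 2 / 4 ≠ 0 := by
          have := pow_ne_zero 2 hd0
          simpa using this
        apply mul_left_cancel₀ h4
        linear_combination -h3
      · rintro ⟨c, rfl⟩
        rw [Matrix.mulVec_smul, hA1, smul_comm]
    rw [this, finrank_span_singleton one_ne_zero]
  refine ⟨htop, h0, ?_⟩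
  let μ : Fin 3 → ℂ := ![(d : ℂ) ^ 2 / 2, -((d : ℂ) / 2), (d : ℂ) / 2]
  have hμ : Function.Injective μ := by
    have e1 : (d : ℂ) ^ 2 / 2 ≠ -((d : ℂ) / 2) := by
      intro h
      apply hdm1
      apply mul_left_cancel₀ hd0
      linear_combination 2 * h
    have e2 : (d : ℂ) ^ 2 / 2 ≠ (d : ℂ) / 2 := by
      intro h
      apply hd1
      apply mul_left_cancel₀ hd0
      linear_combination 2 * h
    have e3 : -((d : ℂ) / 2) ≠ (d : ℂ) / 2 := by
      intro h
      apply hd0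
      linear_combination -h
    intro i j
    fin_cases i <;> fin_cases j <;> simp [μ, e1, e2, e3, e1.symm, e2.symm, e3.symm, -div_left_inj']
  have hint : DirectSum.IsInternal
      (fun i => Module.End.eigenspace (Matrix.toLin' A) (μ i)) := by
    apply DirectSum.isInternal_submodule_of_iSupIndep_of_iSup_eq_top
    · exact (Module.End.eigenspaces_iSupIndep (Matrix.toLin' A)).comp hμ
    · rw [eq_top_iff, htop]
      refine sup_le (sup_le ?_ ?_) ?_
      · exact le_iSup (fun i => Module.End.eigenspace (Matrix.toLin' A) (μ i)) 0
      · exact le_iSup (fun i => Module.End.eigenspace (Matrix.toLin' A) (μ i)) 1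
      · exact le_iSup (fun i => Module.End.eigenspace (Matrix.toLin' A) (μ i)) 2
  have hmaps : ∀ i, Set.MapsTo (Matrix.toLin' A)
      (Module.End.eigenspace (Matrix.toLin' A) (μ i))
      (Module.End.eigenspace (Matrix.toLin' A) (μ i)) := by
    intro i x hx
    have hx' := hx
    rw [SetLike.mem_coe, Module.End.mem_eigenspace_iff] at hx
    rw [hx]
    exact Submodule.smul_mem _ _ hx'
  have hres : ∀ i, (Matrix.toLin' A).restrict (hmaps i) = μ i • LinearMap.id := by
    intro i
    ext1 x
    apply Subtype.ext
    have := x.2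
    rw [Module.End.mem_eigenspace_iff] at this
    exact this
  have t1 := LinearMap.trace_eq_sum_trace_restrict hint hmaps
  have t2 := LinearMap.trace_eq_sum_trace_restrict (f := LinearMap.id) hint (fun i x hx => hx)
  have hid : ∀ i, (LinearMap.id : (I → ℂ) →ₗ[ℂ] (I → ℂ)).restrict
      (p := Module.End.eigenspace (Matrix.toLin' A) (μ i))
      (q := Module.End.eigenspace (Matrix.toLin' A) (μ i)) (fun x hx => hx) = LinearMap.id := by
    intro i; rfl
  simp only [hres, hid, map_smul, LinearMap.trace_id, Fin.sum_univ_three] at t1 t2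
  rw [Matrix.trace_toLin'_eq, htr] at t1
  rw [Module.finrank_fintype_fun_eq_card] at t2
  replace t1 : (0 : ℂ) = ((d : ℂ) ^ 2 / 2) * (Module.finrank ℂ (Module.End.eigenspace (Matrix.toLin' A) ((d : ℂ) ^ 2 / 2)) : ℂ) +
      (-((d : ℂ) / 2)) * (Module.finrank ℂ (Module.End.eigenspace (Matrix.toLin' A) (-((d : ℂ) / 2))) : ℂ) +
      ((d : ℂ) / 2) * (Module.finrank ℂ (Module.End.eigenspace (Matrix.toLin' A) ((d : ℂ) / 2)) : ℂ) := t1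
  replace t2 : (Fintype.card I : ℂ) = (Module.finrank ℂ (Module.End.eigenspace (Matrix.toLin' A) ((d : ℂ) ^ 2 / 2)) : ℂ) +
      (Module.finrank ℂ (Module.End.eigenspace (Matrix.toLin' A) (-((d : ℂ) / 2))) : ℂ) +
      (Module.finrank ℂ (Module.End.eigenspace (Matrix.toLin' A) ((d : ℂ) / 2)) : ℂ) := t2
  rw [h0] at t1 t2
  generalize Module.finrank ℂ (Module.End.eigenspace (Matrix.toLin' A) (-((d : ℂ) / 2))) = a at *
  generalize Module.finrank ℂ (Module.End.eigenspace (Matrix.toLin' A) ((d : ℂ) / 2)) = b at *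
  have hab : a = b + d := by
    have : (a : ℂ) = ((b + d : ℕ) : ℂ) := by
      apply mul_left_cancel₀ hd0
      push_cast
      push_cast at t1
      linear_combination 2 * t1
    exact_mod_cast this
  have hab2 : Fintype.card I = 1 + a + b := by exact_mod_cast t2
  obtain ⟨e, rfl⟩ : ∃ e, d = e + 1 := ⟨d - 1, by omega⟩
  subst hab
  rw [Nat.add_sub_cancel]
  have k1 : (e + 1) * (e + 1 + 1) = 2 * (b + (e + 1) + 1) := by nlinarith
  have k2 : (e + 1) * e = 2 * (b + 1) := by nlinarith
  rw [k1, k2]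
  omega

/-- Single-qubit commutation sign. -/
def sgn1 (a b : Fin 4) : ℂ := if a = 0 ∨ b = 0 ∨ a = b then 1 else -1

lemma sgn1_pm (a b : Fin 4) : sgn1 a b = 1 ∨ sgn1 a b = -1 := by
  unfold sgn1; split_ifs <;> simp

lemma sgn1_sum (a b : Fin 4) : ∑ c, sgn1 a c * sgn1 c b = if a = b then 4 else 0 := by
  fin_cases a <;> fin_cases b <;> simp [sgn1, Fin.sum_univ_four] <;> norm_num

lemma pauli1_comm (a b : Fin 4) : pauli1 a * pauli1 b = sgn1 a b • (pauli1 b * pauli1 a) := by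
  fin_cases a <;> fin_cases b <;> ext i j <;> fin_cases i <;> fin_cases j <;>
    simp [sgn1, pauli1, Matrix.mul_apply, Fin.sum_univ_two, Matrix.one_apply]

lemma pauli1_trace (a b : Fin 4) : (pauli1 a * pauli1 b).trace = if a = b then 2 else 0 := by
  fin_cases a <;> fin_cases b <;>
    simp [pauli1, Matrix.mul_apply, Fin.sum_univ_two, Matrix.trace, Matrix.one_apply] <;> norm_num

lemma pauli1_sq (a : Fin 4) : pauli1 a * pauli1 a = 1 := by
  fin_cases a <;> ext i j <;> fin_cases i <;> fin_cases j <;>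
    simp [pauli1, Matrix.mul_apply, Fin.sum_univ_two, Matrix.one_apply]

/-- Labels. -/
abbrev Lab (q : ℕ) := Fin q → Fin 4

/-- Commutation sign of two labels. -/
def sgn {q : ℕ} (a b : Lab q) : ℂ := ∏ i, sgn1 (a i) (b i)

lemma sgn_pm {q : ℕ} (a b : Lab q) : sgn a b = 1 ∨ sgn a b = -1 := by
  unfold sgn
  refine Finset.prod_induction _ (fun x => x = 1 ∨ x = -1) ?_ (Or.inl rfl)
    (fun i _ => sgn1_pm _ _)
  rintro x y (rfl | rfl) (rfl | rfl) <;> simp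

lemma sgn_zero_left {q : ℕ} (b : Lab q) : sgn 0 b = 1 := by simp [sgn, sgn1]
lemma sgn_zero_right {q : ℕ} (b : Lab q) : sgn b 0 = 1 := by simp [sgn, sgn1]
lemma sgn_self {q : ℕ} (b : Lab q) : sgn b b = 1 := by simp [sgn, sgn1]
lemma sgn_comm {q : ℕ} (a b : Lab q) : sgn a b = sgn b a := by
  unfold sgn sgn1
  refine Finset.prod_congr rfl fun i _ => ?_
  congr 1
  simp only [eq_iff_iff]
  constructor <;> (rintro (h | h | h) <;> simp [h])

lemma prod_ite_all {q : ℕ} (a b : Lab q) (x : ℂ) :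
    ∏ i, (if a i = b i then x else 0) = if a = b then x ^ q else 0 := by
  split_ifs with h
  · subst h; simp
  · obtain ⟨i, hi⟩ := Function.ne_iff.1 h
    exact Finset.prod_eq_zero (Finset.mem_univ i) (by simp [hi])

lemma sgn_sum {q : ℕ} (a b : Lab q) : ∑ c, sgn a c * sgn c b = if a = b then 4 ^ q else 0 := by
  rw [← prod_ite_all]
  simp only [← sgn1_sum, sgn, ← Finset.prod_mul_distrib]
  rw [Finset.prod_univ_sum, Fintype.piFinset_univ]

lemma sgn_sum_left {q : ℕ} (a : Lab q) : ∑ c, sgn a c = if a = 0 then 4 ^ q else 0 := by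
  rw [← sgn_sum]; simp [sgn_zero_right]

lemma PauliOp_mul {q : ℕ} (a b : Lab q) : PauliOp a * PauliOp b =
    Matrix.of fun x y => ∏ i, (pauli1 (a i) * pauli1 (b i)) (x i) (y i) := by
  ext x y
  simp only [PauliOp, Matrix.mul_apply, Matrix.of_apply, ← Finset.prod_mul_distrib]
  rw [Finset.prod_univ_sum, Fintype.piFinset_univ]

lemma PauliOp_comm {q : ℕ} (a b : Lab q) :
    PauliOp a * PauliOp b = sgn a b • (PauliOp b * PauliOp a) := by
  rw [PauliOp_mul, PauliOp_mul]
  ext x y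
  simp only [Matrix.of_apply, Matrix.smul_apply, smul_eq_mul, sgn, ← Finset.prod_mul_distrib]
  refine Finset.prod_congr rfl fun i _ => ?_
  rw [pauli1_comm]; rfl

lemma PauliOp_trace {q : ℕ} (a b : Lab q) :
    (PauliOp a * PauliOp b).trace = if a = b then 2 ^ q else 0 := by
  rw [PauliOp_mul, ← prod_ite_all]
  simp only [← pauli1_trace, Matrix.trace, Matrix.diag, Matrix.of_apply]
  rw [Finset.prod_univ_sum, Fintype.piFinset_univ]

lemma one_prod {q : ℕ} : (Matrix.of fun x y : Idx q => ∏ i, (1 : Matrix (Fin 2) (Fin 2) ℂ) (x i) (y i))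
    = (1 : Mat q) := by
  ext x y
  simp only [Matrix.of_apply, Matrix.one_apply]
  split_ifs with h
  · subst h; simp
  · obtain ⟨i, hi⟩ := Function.ne_iff.1 h
    exact Finset.prod_eq_zero (Finset.mem_univ i) (by simp [hi])

lemma PauliOp_sq {q : ℕ} (a : Lab q) : PauliOp a * PauliOp a = 1 := by
  rw [PauliOp_mul, ← one_prod]
  simp only [pauli1_sq]

lemma PauliOp_zero {q : ℕ} : PauliOp (0 : Lab q) = 1 := by
  rw [← one_prod]; rfl

lemma sqrtd_ne {q : ℕ} : sqrtd q ≠ 0 := by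
  unfold sqrtd
  have : Real.sqrt (2 ^ q) ≠ 0 := by positivity
  exact_mod_cast this

lemma sqrtd_sq {q : ℕ} : sqrtd q * sqrtd q = 2 ^ q := by
  unfold sqrtd
  rw [← Complex.ofReal_mul, Real.mul_self_sqrt (by positivity)]
  push_cast; rfl

/-- Normalized Pauli. -/
def PN {q : ℕ} (a : Lab q) : Mat q := (sqrtd q)⁻¹ • PauliOp a

lemma PN_trace {q : ℕ} (a b : Lab q) : (PN a * PN b).trace = if a = b then 1 else 0 := by
  simp only [PN, Matrix.smul_mul, Matrix.mul_smul, Matrix.trace_smul, PauliOp_trace, smul_eq_mul]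
  split_ifs
  · rw [← sqrtd_sq]; have := @sqrtd_ne q; field_simp
  · simp

lemma PN_comm {q : ℕ} (a b : Lab q) : PN a * PN b = sgn a b • (PN b * PN a) := by
  simp only [PN, Matrix.smul_mul, Matrix.mul_smul]
  rw [PauliOp_comm]
  simp only [smul_smul]
  congr 1; ring

lemma PN_mul_ne {q : ℕ} (a b : Lab q) : PN a * PN b ≠ 0 := by
  intro h
  have h2 : PauliOp a * PauliOp b = 0 := by
    simp only [PN, Matrix.smul_mul, Matrix.mul_smul, smul_smul] at h
    rcases smul_eq_zero.1 h with h | h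
    · have := @sqrtd_ne q
      simp [this] at h
    · exact h
  have h3 : PauliOp a * (PauliOp a * PauliOp b) * PauliOp b = 0 := by rw [h2]; simp
  rw [← mul_assoc, PauliOp_sq, one_mul, PauliOp_sq] at h3
  exact one_ne_zero h3

lemma PN_inj {q : ℕ} : Function.Injective (PN (q := q)) := by
  intro a b h
  have h1 := PN_trace a a
  rw [if_pos rfl] at h1
  nth_rewrite 2 [h] at h1
  rw [PN_trace] at h1
  by_contra hne
  simp [hne] at h1

lemma PN_ne_neg {q : ℕ} (a b : Lab q) : PN a ≠ - PN b := by
  intro h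
  have h1 := PN_trace a a
  rw [if_pos rfl] at h1
  nth_rewrite 2 [h] at h1
  rw [Matrix.mul_neg, Matrix.trace_neg, PN_trace] at h1
  split_ifs at h1 <;> norm_num at h1

lemma PN_zero {q : ℕ} : PN (0 : Lab q) = sigma0 q := by
  rw [PN, PauliOp_zero, sigma0]

/-- Nonidentity labels. -/
abbrev NL (q : ℕ) := {a : Lab q // a ≠ 0}

lemma sigmaSet_eq (q : ℕ) : sigmaSet q = Set.range (fun a : NL q => PN a.1) := by
  ext M
  constructor
  · rintro ⟨⟨a, rfl⟩, h⟩
    refine ⟨⟨a, ?_⟩, rfl⟩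
    rintro rfl
    exact h PN_zero
  · rintro ⟨a, rfl⟩
    refine ⟨⟨a.1, rfl⟩, ?_⟩
    intro h
    rw [Set.mem_singleton_iff, ← PN_zero] at h
    exact a.2 (PN_inj h)

lemma PNs_inj {q : ℕ} : Function.Injective (fun a : NL q => PN a.1) :=
  fun _ _ h => Subtype.ext (PN_inj h)

lemma sum_sigmaSet {q : ℕ} {M : Type*} [AddCommMonoid M] (f : Mat q → M) :
    ∑ᶠ σ ∈ sigmaSet q, f σ = ∑ a : NL q, f (PN a.1) := by
  rw [sigmaSet_eq, finsum_mem_range PNs_inj, finsum_eq_sum_of_fintype]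

/-- The anticommutation matrix. -/
def AM (q : ℕ) : Matrix (NL q) (NL q) ℂ := Matrix.of fun a b => (1 - sgn a.1 b.1) / 2

lemma anti_iff {q : ℕ} (a b : Lab q) : PN a * PN b + PN b * PN a = 0 ↔ sgn a b = -1 := by
  rw [PN_comm a b]
  constructor
  · intro h
    rcases sgn_pm a b with h1 | h1
    · rw [h1, one_smul, ← two_smul ℂ] at h
      rcases smul_eq_zero.1 h with h | h
      · norm_num at h
      · exact absurd h (PN_mul_ne _ _)
    · exact h1
  · intro h; rw [h]; simp

lemma sum_NSet {q : ℕ} {M : Type*} [AddCommGroup M] [Module ℂ M] (f : Mat q → M) (b : NL q) :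
    ∑ᶠ σ ∈ NSet (PN b.1), f σ = ∑ a : NL q, AM q a b • f (PN a.1) := by
  classical
  have : NSet (PN b.1) = (fun a : NL q => PN a.1) '' {a | sgn a.1 b.1 = -1} := by
    ext M
    simp only [NSet, Set.mem_setOf_eq, sigmaSet_eq, Set.mem_range, Set.mem_image]
    constructor
    · rintro ⟨⟨a, rfl⟩, h⟩
      exact ⟨a, (anti_iff _ _).1 h, rfl⟩
    · rintro ⟨a, h, rfl⟩
      exact ⟨⟨a, rfl⟩, (anti_iff _ _).2 h⟩
  rw [this, finsum_mem_image PNs_inj.injOn, finsum_mem_eq_toFinset_sum]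
  simp only [Set.toFinset_setOf, Finset.sum_filter]
  refine Finset.sum_congr rfl fun a _ => ?_
  simp only [AM, Matrix.of_apply]
  rcases sgn_pm a.1 b.1 with h | h <;> rw [h] <;> norm_num

/-- Diagonal basis vector. -/
def BN {q : ℕ} (a : NL q) : BMat q := PN a.1 ⊗ₖ PN a.1

lemma BN_trace {q : ℕ} (a b : NL q) : (BN a * BN b).trace = if a = b then 1 else 0 := by
  rw [BN, BN, ← Matrix.mul_kronecker_mul, Matrix.trace_kronecker, PN_trace]
  simp [Subtype.ext_iff]

/-- Coordinates to vectors. -/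
def FN (q : ℕ) : (NL q → ℂ) →ₗ[ℂ] BMat q := Fintype.linearCombination ℂ (BN (q := q))

lemma FN_apply {q : ℕ} (v : NL q → ℂ) : FN q v = ∑ a, v a • BN a := rfl

lemma FN_trace {q : ℕ} (v : NL q → ℂ) (b : NL q) : (FN q v * BN b).trace = v b := by
  rw [FN_apply, Finset.sum_mul, Matrix.trace_sum]
  simp only [Matrix.smul_mul, Matrix.trace_smul, BN_trace]
  simp

lemma FN_inj {q : ℕ} : Function.Injective (FN q) := by
  intro v w h
  ext b
  rw [← FN_trace v, h, FN_trace]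

lemma Vdiag_eq (q : ℕ) : Vdiag q = LinearMap.range (FN q) := by
  rw [FN, Fintype.range_linearCombination, Vdiag]
  congr 1
  ext M
  simp only [sigmaSet_eq, Set.mem_setOf_eq, Set.mem_range]
  constructor
  · rintro ⟨_, ⟨a, rfl⟩, rfl⟩; exact ⟨a, rfl⟩
  · rintro ⟨a, rfl⟩; exact ⟨_, ⟨a, rfl⟩, rfl⟩

lemma AM_symm {q : ℕ} (a b : NL q) : AM q a b = AM q b a := by
  simp only [AM, Matrix.of_apply, sgn_comm]

lemma sum_NL {q : ℕ} (f : Lab q → ℂ) (h : f 0 = 0) : ∑ a : NL q, f a.1 = ∑ a, f a := by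
  classical
  rw [← Fintype.sum_subtype_add_sum_subtype (fun a : Lab q => a ≠ 0) f]
  symm
  convert add_zero _
  apply Finset.sum_eq_zero
  rintro ⟨a, ha⟩ -
  rw [not_not] at ha
  simp [ha, h]

lemma card_NL (q : ℕ) : Fintype.card (NL q) + 1 = (2 ^ q) ^ 2 := by
  have h : Fintype.card (NL q) = Fintype.card (Lab q) - 1 := by
    rw [Fintype.card_subtype_compl, Fintype.card_subtype_eq]
  have h2 : Fintype.card (Lab q) = (2 ^ q) ^ 2 := by
    rw [← pow_mul, mul_comm, pow_mul]
    simp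
  rw [h, h2]
  exact Nat.sub_add_cancel (Nat.one_le_pow _ _ (by positivity))

lemma four_pow (q : ℕ) : (4 : ℂ) ^ q = (2 ^ q) ^ 2 := by
  rw [← pow_mul, mul_comm, pow_mul]; norm_num

lemma AM_one (q : ℕ) : AM q *ᵥ 1 = ((2 ^ q : ℂ) ^ 2 / 2) • (1 : NL q → ℂ) := by
  ext a
  simp only [Matrix.mulVec, dotProduct, Pi.one_apply, mul_one, Pi.smul_apply, smul_eq_mul, AM,
    Matrix.of_apply]
  rw [sum_NL (fun c => (1 - sgn a.1 c) / 2) (by simp [sgn_zero_right]), ← Finset.sum_div,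
    Finset.sum_sub_distrib, sgn_sum_left, if_neg a.2]
  simp [four_pow]

lemma AM_sq_apply {q : ℕ} (a b : NL q) :
    ∑ c, AM q a c * AM q c b = ((2 ^ q : ℂ) ^ 2 / 4) * (1 + if a = b then 1 else 0) := by
  simp only [AM, Matrix.of_apply]
  rw [sum_NL (fun c => (1 - sgn a.1 c) / 2 * ((1 - sgn c b.1) / 2)) (by simp [sgn_zero_right])]
  have : ∀ c, (1 - sgn a.1 c) / 2 * ((1 - sgn c b.1) / 2) =
      (1 - sgn a.1 c - sgn b.1 c + sgn a.1 c * sgn c b.1) / 4 := by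
    intro c; rw [sgn_comm b.1 c]; ring
  simp only [this]
  rw [← Finset.sum_div, Finset.sum_add_distrib, Finset.sum_sub_distrib, Finset.sum_sub_distrib,
    sgn_sum_left, sgn_sum_left, sgn_sum, if_neg a.2, if_neg b.2]
  simp only [Subtype.ext_iff, Finset.sum_const, Finset.card_univ, Fintype.card_fun, Fintype.card_fin,
    nsmul_eq_mul]
  push_cast
  rw [four_pow]
  split_ifs <;> ring

lemma AM_sq {q : ℕ} (v : NL q → ℂ) : AM q *ᵥ (AM q *ᵥ v) =
    ((2 ^ q : ℂ) ^ 2 / 4) • (v + (∑ i, v i) • (1 : NL q → ℂ)) := by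
  rw [Matrix.mulVec_mulVec]
  ext a
  simp only [Matrix.mulVec, dotProduct, Matrix.mul_apply, AM_sq_apply, Pi.smul_apply, Pi.add_apply,
    Pi.one_apply, smul_eq_mul, mul_assoc, ← Finset.mul_sum]
  congr 1
  simp [add_mul, Finset.sum_add_distrib, add_comm]

lemma AM_trace (q : ℕ) : (AM q).trace = 0 := by
  simp [Matrix.trace, AM, sgn_self]

lemma finrank_map_inj {V W : Type*} [AddCommGroup V] [Module ℂ V] [AddCommGroup W] [Module ℂ W]
    (f : V →ₗ[ℂ] W) (hf : Function.Injective f) (p : Submodule ℂ V) :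
    Module.finrank ℂ (p.map f) = Module.finrank ℂ p :=
  (LinearEquiv.finrank_eq (Submodule.equivMapOfInjective f hf p)).symm

lemma twoCopy_kron {q : ℕ} (U σ : Mat q) :
    twoCopy U (σ ⊗ₖ σ) = (U * σ * Uᴴ) ⊗ₖ (U * σ * Uᴴ) := by
  show (U ⊗ₖ U) * (σ ⊗ₖ σ) * (U ⊗ₖ U)ᴴ = _
  rw [Matrix.conjTranspose_kronecker, ← Matrix.mul_kronecker_mul, ← Matrix.mul_kronecker_mul]

lemma neg_kron_neg {q : ℕ} (σ : Mat q) : (-σ) ⊗ₖ (-σ) = σ ⊗ₖ σ := by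
  ext ⟨i, j⟩ ⟨k, l⟩
  simp

lemma cliff_perm {q : ℕ} (U : Mat q) (hU : U ∈ Cliff q) :
    ∃ g : Equiv.Perm (NL q), (∀ a, twoCopy U (BN a) = BN (g a)) ∧
      ∀ a b, AM q (g a) (g b) = AM q a b := by
  obtain ⟨hu, hc⟩ := hU
  have hu1 : Uᴴ * U = 1 := (Matrix.mem_unitaryGroup_iff'.1 hu)
  have hu2 : U * Uᴴ = 1 := (Matrix.mem_unitaryGroup_iff.1 hu)
  have hconj : ∀ σ τ : Mat q, U * σ * Uᴴ = U * τ * Uᴴ → σ = τ := by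
    intro σ τ h
    have h2 : Uᴴ * (U * σ * Uᴴ) * U = Uᴴ * (U * τ * Uᴴ) * U := by rw [h]
    have h3 : ∀ x : Mat q, Uᴴ * (U * x * Uᴴ) * U = x := by
      intro x
      calc Uᴴ * (U * x * Uᴴ) * U = (Uᴴ * U) * x * (Uᴴ * U) := by noncomm_ring
        _ = x := by rw [hu1]; simp
    rwa [h3, h3] at h2
  have hmul : ∀ σ τ : Mat q, (U * σ * Uᴴ) * (U * τ * Uᴴ) = U * (σ * τ) * Uᴴ := by
    intro σ τ
    calc (U * σ * Uᴴ) * (U * τ * Uᴴ) = U * σ * (Uᴴ * U) * τ * Uᴴ := by noncomm_ring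
      _ = U * (σ * τ) * Uᴴ := by rw [hu1]; simp [mul_assoc]
  have hex : ∀ a : NL q, ∃ b : NL q, ∃ e : ℂ, (e = 1 ∨ e = -1) ∧
      U * PN a.1 * Uᴴ = e • PN b.1 := by
    intro a
    obtain ⟨τ, ⟨b, rfl⟩, h⟩ := hc (PN a.1) ⟨a.1, rfl⟩
    change _ = PN b ∨ _ = - PN b at h
    have h' : ∃ e : ℂ, (e = 1 ∨ e = -1) ∧ U * PN a.1 * Uᴴ = e • PN b := by
      rcases h with h | h
      · exact ⟨1, Or.inl rfl, by simpa using h⟩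
      · exact ⟨-1, Or.inr rfl, by simpa using h⟩
    obtain ⟨e, he, h'⟩ := h'
    refine ⟨⟨b, ?_⟩, e, he, h'⟩
    rintro rfl
    have h0 : U * (e • PN (0 : Lab q)) * Uᴴ = e • PN (0 : Lab q) := by
      rw [PN_zero, sigma0]
      simp [hu2]
    have h1 := hconj _ _ (h'.trans h0.symm)
    rcases he with rfl | rfl
    · rw [one_smul] at h1; exact a.2 (PN_inj h1)
    · rw [neg_smul, one_smul] at h1; exact PN_ne_neg _ _ h1
  choose g e he hg using hex
  have ginj : Function.Injective g := by
    intro a b h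
    have h1 : U * PN a.1 * Uᴴ = U * ((e a * e b) • PN b.1) * Uᴴ := by
      rw [hg, h, Matrix.mul_smul, Matrix.smul_mul, hg, smul_smul]
      congr 1
      rcases he a with h1 | h1 <;> rcases he b with h2 | h2 <;> rw [h1, h2] <;> norm_num
    have h2 := hconj _ _ h1
    have h3 : e a * e b = 1 ∨ e a * e b = -1 := by
      rcases he a with h1 | h1 <;> rcases he b with h2 | h2 <;> rw [h1, h2] <;> norm_num
    rcases h3 with h3 | h3
    · rw [h3, one_smul] at h2; exact PNs_inj h2
    · rw [h3, neg_smul, one_smul] at h2; exact absurd h2 (PN_ne_neg _ _)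
  refine ⟨Equiv.ofBijective g (Finite.injective_iff_bijective.1 ginj), ?_, ?_⟩
  · intro a
    show twoCopy U (PN a.1 ⊗ₖ PN a.1) = PN (g a).1 ⊗ₖ PN (g a).1
    rw [twoCopy_kron, hg]
    rcases he a with h1 | h1 <;> rw [h1]
    · rw [one_smul]
    · rw [neg_smul, one_smul, neg_kron_neg]
  · intro a b
    show AM q (g a) (g b) = AM q a b
    have hs : sgn (g a).1 (g b).1 = sgn a.1 b.1 := by
      have h1 : U * (PN a.1 * PN b.1) * Uᴴ = (e a * e b) • (PN (g a).1 * PN (g b).1) := by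
        rw [← hmul, hg, hg]; simp [smul_smul, mul_comm]
      have h2 : U * (PN b.1 * PN a.1) * Uᴴ = (e a * e b) • (PN (g b).1 * PN (g a).1) := by
        rw [← hmul, hg, hg]; simp [smul_smul, mul_comm]
      rw [PN_comm a.1 b.1, PN_comm (g a).1 (g b).1, Matrix.mul_smul, Matrix.smul_mul, h2, smul_comm,
        ← sub_eq_zero, ← smul_sub, ← sub_smul] at h1
      have he0 : e a * e b ≠ 0 := by
        rcases he a with h1 | h1 <;> rcases he b with h2 | h2 <;> rw [h1, h2] <;> norm_num
      rcases smul_eq_zero.1 h1 with h | h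
      · exact absurd h he0
      rcases smul_eq_zero.1 h with h | h
      · exact (sub_eq_zero.1 h).symm
      · exact absurd h (PN_mul_ne _ _)
    simp only [AM, Matrix.of_apply, hs]

/-- properties of the map `𝒯` on the diagonal sector determined by
`𝒯(τ⊗τ) = Σ_{σ∈N_τ} σ⊗σ`. -/
theorem statement4 (q : ℕ) (hq : 2 ≤ q)
    (T : BMat q →ₗ[ℂ] BMat q)
    (hT : ∀ τ ∈ sigmaSet q, T (τ ⊗ₖ τ) = ∑ᶠ σ ∈ NSet τ, σ ⊗ₖ σ) :
    (∀ U ∈ Cliff q, ∀ v ∈ Vdiag q, T (twoCopy U v) = twoCopy U (T v)) ∧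
    T (∑ᶠ σ ∈ sigmaSet q, σ ⊗ₖ σ) =
      ((2 ^ q : ℂ) ^ 2 / 2) • ∑ᶠ σ ∈ sigmaSet q, σ ⊗ₖ σ ∧
    (∀ lam : Mat q → ℂ, (∑ᶠ σ ∈ sigmaSet q, lam σ) = 0 →
      T (T (∑ᶠ σ ∈ sigmaSet q, lam σ • (σ ⊗ₖ σ))) =
        ((2 ^ q : ℂ) ^ 2 / 4) • ∑ᶠ σ ∈ sigmaSet q, lam σ • (σ ⊗ₖ σ)) ∧
    Vdiag q =
      (Vdiag q ⊓ Module.End.eigenspace T ((2 ^ q : ℂ) ^ 2 / 2)) ⊔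
      (Vdiag q ⊓ Module.End.eigenspace T (-((2 ^ q : ℂ) / 2))) ⊔
      (Vdiag q ⊓ Module.End.eigenspace T ((2 ^ q : ℂ) / 2)) ∧
    Module.finrank ℂ ↥(Vdiag q ⊓ Module.End.eigenspace T ((2 ^ q : ℂ) ^ 2 / 2)) = 1 ∧
    Module.finrank ℂ ↥(Vdiag q ⊓ Module.End.eigenspace T (-((2 ^ q : ℂ) / 2))) =
      2 ^ q * (2 ^ q + 1) / 2 - 1 ∧
    Module.finrank ℂ ↥(Vdiag q ⊓ Module.End.eigenspace T ((2 ^ q : ℂ) / 2)) =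
      2 ^ q * (2 ^ q - 1) / 2 - 1 := by
  have hTB : ∀ b : NL q, T (BN b) = ∑ a, AM q a b • BN a := by
    intro b
    rw [BN, hT _ (by rw [sigmaSet_eq]; exact ⟨b, rfl⟩), sum_NSet (fun σ => σ ⊗ₖ σ) b]
    rfl
  have hTF : ∀ v, T (FN q v) = FN q (AM q *ᵥ v) := by
    intro v
    rw [FN_apply, FN_apply, map_sum]
    simp only [map_smul, hTB, Matrix.mulVec, dotProduct, Finset.sum_smul, Finset.smul_sum, smul_smul]
    rw [Finset.sum_comm]
    simp only [mul_comm]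
  have hsum : ∑ᶠ σ ∈ sigmaSet q, σ ⊗ₖ σ = FN q 1 := by
    rw [sum_sigmaSet (fun σ => σ ⊗ₖ σ), FN_apply]
    simp [BN]
  have hsuml : ∀ lam : Mat q → ℂ, ∑ᶠ σ ∈ sigmaSet q, lam σ • (σ ⊗ₖ σ) =
      FN q (fun a => lam (PN a.1)) := by
    intro lam
    rw [sum_sigmaSet (fun σ => lam σ • (σ ⊗ₖ σ)), FN_apply]
    rfl
  have heig : ∀ μ : ℂ, Vdiag q ⊓ Module.End.eigenspace T μ =
      (Module.End.eigenspace (Matrix.toLin' (AM q)) μ).map (FN q) := by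
    intro μ
    ext x
    rw [Submodule.mem_inf, Vdiag_eq, Submodule.mem_map]
    constructor
    · rintro ⟨⟨v, rfl⟩, h⟩
      refine ⟨v, ?_, rfl⟩
      rw [Module.End.mem_eigenspace_iff] at h ⊢
      rw [hTF, ← map_smul] at h
      exact FN_inj h
    · rintro ⟨v, h, rfl⟩
      refine ⟨⟨v, rfl⟩, ?_⟩
      rw [Module.End.mem_eigenspace_iff] at h ⊢
      rw [Matrix.toLin'_apply] at h
      rw [hTF, h, map_smul]
  have hspec := matrix_spec (AM q) (2 ^ q) (2 ^ q) (by push_cast; rfl)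
    (le_trans (by norm_num) (Nat.pow_le_pow_right (by norm_num) hq)) (card_NL q)
    (AM_one q) AM_sq (AM_trace q)
  refine ⟨?_, ?_, ?_, ?_, ?_, ?_, ?_⟩
  · intro U hU v hv
    obtain ⟨g, hg1, hg2⟩ := cliff_perm U hU
    rw [Vdiag_eq] at hv
    obtain ⟨w, rfl⟩ := hv
    rw [FN_apply]
    simp only [map_sum, map_smul, hg1, hTB]
    refine Finset.sum_congr rfl fun b _ => ?_
    congr 1
    rw [← Equiv.sum_comp g]
    simp only [hg2]
  · rw [hsum, hTF, AM_one, map_smul]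
  · intro lam hlam
    rw [sum_sigmaSet] at hlam
    rw [hsuml, hTF, hTF, AM_sq, map_smul, hlam]
    simp
  · rw [heig, heig, heig, ← Submodule.map_sup, ← Submodule.map_sup, ← hspec.1, Vdiag_eq,
      Submodule.map_top]
  · rw [heig, finrank_map_inj _ FN_inj, hspec.2.1]
  · rw [heig, finrank_map_inj _ FN_inj, hspec.2.2.1]
  · rw [heig, finrank_map_inj _ FN_inj, hspec.2.2.2]

end CliffordPaper
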